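/- (Newton-iteration invariant) Let 1 ≤ j with j + 2 ≤ m. Suppose Λ, B, B̄, r̄ ∈ F[X] satisfy deg Λ ≤ 2^j − 1, deg B ≤ 2^j − 1, deg B̄ ≤ 2^j − 1, deg r̄ ≤ 2^j, and Λ · B · s_1 = s_{j+1} + r̄. Set B′ = B·s_j + B̄ and let Λ′ be the quotient of (s_j · Λ)^2 · B′ · s_1 on division by the monic polynomial s_{j+2}. Then Λ′ · B′ · s_1 = s_{j+2} + r̄′ for some r̄′ ∈ F[X] with deg r̄′ ≤ 2^{j+1} (equivalently, deg(Λ′·B′·s_1 + s_{j+2}) ≤ 2^{j+1}, subtraction equaling addition in characteristic 2). -/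

import Mathlib

open Polynomial Finset

/-- The GF(2)-linear span of `v 0, …, v (k-1)` as a `Finset`. -/
noncomputable def Vset {F : Type*} [Field F] (v : ℕ → F) (k : ℕ) : Finset F :=
  letI := Classical.decEq F
  (Finset.univ : Finset (Fin k → Bool)).image
    (fun ε => ∑ j : Fin k, if ε j then v j else 0)

/-- The subspace polynomial `s_k(X) = ∏_{a ∈ V_k} (X - a)`. -/
noncomputable def sPoly {F : Type*} [Field F] (v : ℕ → F) (k : ℕ) : Polynomial F :=
  ∏ a ∈ Vset v k, (X - C a)

/-- The basis polynomial `X_i(X) = ∏_{j<m} s_j(X)^{i_j}`, where `i_j` is the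
`j`-th binary digit of `i`. -/
noncomputable def XPoly {F : Type*} [Field F] (v : ℕ → F) (m i : ℕ) : Polynomial F :=
  ∏ j ∈ Finset.range m, (sPoly v j) ^ (Nat.testBit i j).toNat

/-- The normalizing constant `p_i = ∏_{j<m} (s_j(v_j))^{i_j}`. -/
noncomputable def pCoef {F : Type*} [Field F] (v : ℕ → F) (m i : ℕ) : F :=
  ∏ j ∈ Finset.range m, ((sPoly v j).eval (v j)) ^ (Nat.testBit i j).toNat

/-- `v 0, …, v (m-1)` are linearly independent over the prime field GF(2). -/
def LinIndepGF2 {F : Type*} [Field F] (v : ℕ → F) (m : ℕ) : Prop :=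
  ∀ ε : ℕ → Bool, (∑ j ∈ Finset.range m, if ε j then v j else 0) = 0 →
    ∀ j < m, ε j = false



lemma sPoly_inj {F : Type*} [Field F] [CharP F 2] (m : ℕ) (v : ℕ → F) (hv : LinIndepGF2 v m)
    (k : ℕ) (hk : k ≤ m) :
    Function.Injective (fun ε : Fin k → Bool => ∑ j : Fin k, if ε j then v j else 0) := by
  intro ε ε' h
  have h2 : ∀ x : F, x + x = 0 := fun x => CharTwo.add_self_eq_zero x
  let δ : ℕ → Bool := fun i => if hi : i < k then xor (ε ⟨i, hi⟩) (ε' ⟨i, hi⟩) else false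
  have hs : (∑ i ∈ Finset.range m, if δ i then v i else 0) = 0 := by
    have h1 : (∑ i ∈ Finset.range m, if δ i then v i else 0)
        = ∑ i ∈ Finset.range k, if δ i then v i else 0 := by
      symm
      apply Finset.sum_subset
      · intro x hx
        simp at *
        omega
      · intro x _ hx
        have : ¬ x < k := by simpa using hx
        simp [δ, this]
    rw [h1, Finset.sum_range]
    have h3 : ∀ i : Fin k, (if δ i then v i else 0)
        = (if ε i then v i else 0) + (if ε' i then v i else 0) := by
      intro i
      have : δ i = xor (ε i) (ε' i) := by simp [δ]
      rw [this]
      cases ε i <;> cases ε' i <;> simp [h2]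
    simp only [h3, Finset.sum_add_distrib]
    have h' : (∑ j : Fin k, if ε j then v j else 0) = ∑ j : Fin k, if ε' j then v j else 0 := h
    rw [h', h2]
  have := hv δ hs
  funext i
  have h5 := this i (by omega)
  have h6 : δ i = xor (ε i) (ε' i) := by simp [δ]
  rw [h6] at h5
  revert h5
  cases ε i <;> cases ε' i <;> simp

lemma sPoly_eq_prod {F : Type*} [Field F] [CharP F 2] (m : ℕ) (v : ℕ → F) (hv : LinIndepGF2 v m)
    (k : ℕ) (hk : k ≤ m) :
    sPoly v k = ∏ ε : Fin k → Bool, (X - C (∑ j : Fin k, if ε j then v j else 0)) := by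
  classical
  unfold sPoly Vset
  rw [Finset.prod_image]
  intro a _ b _ h
  exact sPoly_inj m v hv k hk h

lemma sPoly_monic {F : Type*} [Field F] (v : ℕ → F) (k : ℕ) : (sPoly v k).Monic :=
  monic_prod_of_monic _ _ fun a _ => monic_X_sub_C a

lemma sPoly_succ_comp {F : Type*} [Field F] [CharP F 2] (m : ℕ) (v : ℕ → F)
    (hv : LinIndepGF2 v m) (k : ℕ) (hk : k + 1 ≤ m) :
    sPoly v (k + 1) = sPoly v k * (sPoly v k).comp (X + C (v k)) := by
  rw [sPoly_eq_prod m v hv _ hk, sPoly_eq_prod m v hv k (by omega),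
    ← (Fin.snocEquiv (fun _ : Fin (k+1) => Bool)).prod_comp, Fintype.prod_prod_type]
  rw [Fintype.prod_bool, mul_comm, Polynomial.prod_comp]
  congr 1
  · apply Finset.prod_congr rfl
    intro ε _
    simp [Fin.snocEquiv, Fin.sum_univ_castSucc]
  · apply Finset.prod_congr rfl
    intro ε _
    have h : (C (v k) : F[X]) + C (v k) = 0 := CharTwo.add_self_eq_zero _
    simp only [Fin.snocEquiv, Fin.sum_univ_castSucc, Equiv.coe_fn_mk, Fin.snoc_castSucc,
      Fin.snoc_last, if_true, Fin.val_castSucc, Fin.val_last, C_add, sub_comp, X_comp, C_comp]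
    linear_combination -h

lemma sPoly_add {F : Type*} [Field F] [CharP F 2] (m : ℕ) (v : ℕ → F)
    (hv : LinIndepGF2 v m) (k : ℕ) (hk : k ≤ m) (a : F) :
    (sPoly v k).comp (X + C a) = sPoly v k + C ((sPoly v k).eval a) := by
  induction k generalizing a with
  | zero => simp [sPoly_eq_prod m v hv 0 hk]
  | succ k ih =>
    have ih' := ih (by omega)
    have h2 : (2 : F[X]) = 0 := CharTwo.two_eq_zero
    rw [sPoly_succ_comp m v hv k hk, ih' (v k)]
    simp only [mul_comp, add_comp, C_comp, ih', eval_mul, eval_add, eval_C, C_mul, C_add]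
    linear_combination (sPoly v k * C (eval a (sPoly v k))) * h2

lemma sPoly_succ {F : Type*} [Field F] [CharP F 2] (m : ℕ) (v : ℕ → F)
    (hv : LinIndepGF2 v m) (k : ℕ) (hk : k + 1 ≤ m) :
    sPoly v (k + 1) = sPoly v k * (sPoly v k + C ((sPoly v k).eval (v k))) := by
  rw [sPoly_succ_comp m v hv k hk, sPoly_add m v hv k (by omega)]

lemma sPoly_natDegree {F : Type*} [Field F] [CharP F 2] (m : ℕ) (v : ℕ → F)
    (hv : LinIndepGF2 v m) (k : ℕ) (hk : k ≤ m) : (sPoly v k).natDegree = 2 ^ k := by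
  rw [sPoly_eq_prod m v hv k hk, natDegree_prod_of_monic _ _ fun a _ => monic_X_sub_C _]
  simp only [natDegree_X_sub_C]
  simp

/-- the Newton-iteration invariant: if `Λ·B·s_1 = s_(j+1) + r̄`
with the stated degree bounds, and `B' = B·s_j + B̄`, `Λ'` is the quotient of
`(s_j·Λ)^2·B'·s_1` by `s_(j+2)`, then `Λ'·B'·s_1 = s_(j+2) + r̄'` with
`deg r̄' ≤ 2^(j+1)`. -/
theorem newton_invariant {F : Type*} [Field F] [Fintype F] (m : ℕ) (hm : 1 ≤ m)
    (hcard : Fintype.card F = 2 ^ m) (v : ℕ → F) (hv : LinIndepGF2 v m)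
    (j : ℕ) (hj : 1 ≤ j) (hjm : j + 2 ≤ m)
    (Λ B Bbar rbar : Polynomial F)
    (hΛ : Λ.degree ≤ ((2 ^ j - 1 : ℕ) : WithBot ℕ))
    (hB : B.degree ≤ ((2 ^ j - 1 : ℕ) : WithBot ℕ))
    (hBbar : Bbar.degree ≤ ((2 ^ j - 1 : ℕ) : WithBot ℕ))
    (hrbar : rbar.degree ≤ ((2 ^ j : ℕ) : WithBot ℕ))
    (heq : Λ * B * sPoly v 1 = sPoly v (j + 1) + rbar) :
    ∃ rbar' : Polynomial F,
      (((sPoly v j * Λ) ^ 2 * (B * sPoly v j + Bbar) * sPoly v 1) /ₘ sPoly v (j + 2))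
          * (B * sPoly v j + Bbar) * sPoly v 1
        = sPoly v (j + 2) + rbar' ∧
      rbar'.degree ≤ ((2 ^ (j + 1) : ℕ) : WithBot ℕ) := by
  have : Fact (Nat.Prime 2) := ⟨Nat.prime_two⟩
  have : CharP F 2 := charP_of_card_eq_prime_pow hcard
  have h2 : (2 : F[X]) = 0 := CharTwo.two_eq_zero
  have hT := sPoly_succ m v hv j (by omega)
  have hU : sPoly v (j + 2) = _ := sPoly_succ m v hv (j + 1) (by omega)
  have dS := (sPoly_natDegree m v hv j (by omega)).le
  have dT := (sPoly_natDegree m v hv (j + 1) (by omega)).le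
  have dUe := sPoly_natDegree m v hv (j + 2) (by omega)
  have d1 := (sPoly_natDegree m v hv 1 (by omega)).le
  have mU := sPoly_monic v (j + 2)
  have hΛ' := natDegree_le_of_degree_le hΛ
  have hB' := natDegree_le_of_degree_le hB
  have hBb' := natDegree_le_of_degree_le hBbar
  have hr' := natDegree_le_of_degree_le hrbar
  set S := sPoly v j
  set T := sPoly v (j + 1)
  set U := sPoly v (j + 2)
  set s1 := sPoly v 1
  set c := eval (v j) S
  set d := eval (v (j + 1)) T
  set P := (S * Λ) ^ 2 * (B * S + Bbar) * s1 with hP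
  have hdiv := modByMonic_add_div P U
  have hR : (P %ₘ U).natDegree < 2 ^ (j + 2) := by
    rw [← dUe]
    apply natDegree_modByMonic_lt _ mU
    intro h
    rw [h] at dUe
    have hp : 0 < 2 ^ (j + 2) := by positivity
    rw [natDegree_one] at dUe
    omega
  set Q := P /ₘ U
  set R := P %ₘ U
  have hpos : 1 ≤ 2 ^ j := Nat.one_le_two_pow
  have e1 : 2 ^ (j + 1) = 2 * 2 ^ j := by ring
  have e2 : 2 ^ (j + 2) = 4 * 2 ^ j := by ring
  rw [e1] at dT
  rw [e2] at dUe hR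
  rw [e1]
  generalize 2 ^ j = n at *
  have dB' : (B * S + Bbar).natDegree ≤ 2 * n - 1 := by
    refine natDegree_add_le_of_degree_le ((natDegree_mul_le_of_le hB' dS).trans ?_)
      (hBb'.trans ?_) <;> omega
  have hlow : S * Λ * (B * S + Bbar) * s1
      = U + (C c * S * T + C d * T + S ^ 2 * rbar + S * Λ * Bbar * s1) := by
    rw [hU]
    linear_combination S ^ 2 * heq + T * hT * (-1) - (C c * S * T + C d * T) * h2
  set W := C c * S * T + C d * T + S ^ 2 * rbar + S * Λ * Bbar * s1 with hW
  have dW : W.natDegree ≤ 3 * n := by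
    refine natDegree_add_le_of_degree_le (natDegree_add_le_of_degree_le
      (natDegree_add_le_of_degree_le ?_ ?_) ?_) ?_
    · exact (natDegree_mul_le_of_le (natDegree_mul_le_of_le (natDegree_C c).le dS) dT).trans
        (by omega)
    · exact (natDegree_mul_le_of_le (natDegree_C d).le dT).trans (by omega)
    · exact (natDegree_mul_le_of_le (natDegree_pow_le_of_le 2 dS) hr').trans (by omega)
    · exact (natDegree_mul_le_of_le (natDegree_mul_le_of_le (natDegree_mul_le_of_le dS hΛ') hBb')
        d1).trans (by omega)
  have key : U * (Q * (B * S + Bbar) * s1 - U) = W ^ 2 - R * (B * S + Bbar) * s1 := by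
    linear_combination (B * S + Bbar) * s1 * hdiv + (B * S + Bbar) * s1 * hP
      + (S * Λ * (B * S + Bbar) * s1 + U + W) * hlow + U * W * h2
  refine ⟨Q * (B * S + Bbar) * s1 - U, by ring, ?_⟩
  apply degree_le_of_natDegree_le
  have hk : (U * (Q * (B * S + Bbar) * s1 - U)).natDegree ≤ 6 * n := by
    rw [key]
    refine natDegree_sub_le_of_le ((natDegree_pow_le_of_le 2 dW).trans (by omega)) ?_ |>.trans
      (max_self _).le
    exact (natDegree_mul_le_of_le (natDegree_mul_le_of_le (Nat.le_sub_one_of_lt hR) dB')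
      d1).trans (by omega)
  by_cases h0 : Q * (B * S + Bbar) * s1 - U = 0
  · rw [h0]
    simp
  · rw [mU.natDegree_mul' h0, dUe] at hk
    omega
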